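/- The function w : ℤ² → [0,∞) is a probability mass function (i.e. Σ_{(x,y)∈ℤ²} w(x,y) = 1), the sums Σ_{(x,y)} |x|·w(x,y) and Σ_{(x,y)} |y|·w(x,y) are finite, and the two marginal means are equal: Σ_{(x,y)} x·w(x,y) = Σ_{(x,y)} y·w(x,y) = 1/(4√7); in particular Σ_{(x,y)} (x+y)·w(x,y) = 1/(2√7). -/

import Mathlib

noncomputable def nuc : ℝ := 1 + 2 * Real.sqrt 7

noncomputable def tc : ℝ := Real.sqrt 10 / (8 * (7 + Real.sqrt 7) ^ ((3:ℝ)/2))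

noncomputable def uc : ℝ := (6/5) * (7 + Real.sqrt 7) * tc

/-- The rational parametrization `û` of the `u`-variable. -/
noncomputable def uhat (H : ℂ) : ℂ :=
  ((uc : ℂ) / 3) * H * (10 - 12 * H + 6 * H ^ 2 - H ^ 3)

/-- The rational parametrization `Ẑ₀`. -/
noncomputable def Z0hat (H : ℂ) : ℂ :=
  (1/10) * (1 - (1 - (Real.sqrt 7 : ℂ)) * H + 3 * H ^ 2 - H ^ 3)
    * (10 - 12 * H + 6 * H ^ 2 - H ^ 3)

/-- The rational parametrization `Ẑ₁`. -/
noncomputable def Z1hat (H : ℂ) : ℂ :=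
  (3 / (10 * (uc : ℂ))) *
    ((Real.sqrt 7 : ℂ) - 1 + H - 3 * (4 - 3 * H + H ^ 2) / (10 - 12 * H + 6 * H ^ 2 - H ^ 3))

/-- The rational parametrization `Â`. -/
noncomputable def Ahat (H : ℂ) : ℂ :=
  (1/10) * ((((3:ℝ)/2) ^ ((7:ℝ)/3) : ℝ) : ℂ) * (9 - 8 * H + 3 * H ^ 2) / (3 - 3 * H + H ^ 2) ^ 2

/-!
Setting `u = 0` in the functional equation gives `Z(0, v) = Z₀(v)`, and dividing by `u` or by `v`
before letting it tend to `0` shows that the boundary rows and columns of the coefficients have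
generating functions `∑ z_{0,q} v^q = Z₀(v)`, `∑ z_{1,q} v^q = Z₁(v)` and `∑ z_{p,1} u^p = Z₁(u)`.

On `[0, 1]` the function `û` is real-analytic and strictly increasing, with critical value
`û(1) = u_c`. The coefficients are nonnegative, so Pringsheim's theorem rules out a singularity of
the four series in `(0, u_c)`, and the identities known near `0` continue along `û` up to `u_c`.
There monotone convergence turns the values of `Ẑ₀` and `Ẑ₁` at `H = 1`, and the slopes
`lim (Ẑ(1) - Ẑ(H)) / (u_c - û(H))`, into the total masses and the first moments of the four
half-lines carrying `w`. What remains is an identity in `ℚ(√7)`.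
-/

open Filter Function Set Topology

section PowerSeriesNonneg

variable {a : ℕ → ℝ} {c h r : ℝ}

/-- The `k`-th Taylor coefficient at `c` of `u ↦ ∑ a p * u ^ p`, obtained by expanding
`(c + h) ^ p` in powers of `h`. It is meaningful when `∑ a p * u ^ p` converges for some `u > |c|`
and takes a junk value otherwise. -/
noncomputable def taylorCoeff (a : ℕ → ℝ) (c : ℝ) (k : ℕ) : ℝ :=
  ∑' p : ℕ, a p * (c ^ (p - k) * p.choose k)

theorem hasSum_pow_mul_pow_mul_choose (c h : ℝ) (p : ℕ) :
    HasSum (fun k ↦ h ^ k * (c ^ (p - k) * p.choose k)) ((c + h) ^ p) := by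
  simp only [← mul_assoc]
  rw [add_comm, add_pow]
  refine hasSum_sum_of_ne_finset_zero fun k hk ↦ ?_
  rw [Nat.choose_eq_zero_of_lt (by simpa using hk), Nat.cast_zero, mul_zero]

theorem summable_mul_pow_mul_pow_mul_choose (ha : ∀ p, 0 ≤ a p) (hc : 0 ≤ c)
    (hs : Summable fun p ↦ a p * (c + |h|) ^ p) :
    Summable fun x : ℕ × ℕ ↦ a x.1 * (h ^ x.2 * (c ^ (x.1 - x.2) * x.1.choose x.2)) := by
  have habs (x : ℕ × ℕ) : ‖a x.1 * (h ^ x.2 * (c ^ (x.1 - x.2) * x.1.choose x.2))‖ =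
      a x.1 * (|h| ^ x.2 * (c ^ (x.1 - x.2) * x.1.choose x.2)) := by
    simp [abs_of_nonneg (ha _), abs_of_nonneg hc]
  have hrow (p : ℕ) := (hasSum_pow_mul_pow_mul_choose c |h| p).mul_left (a p)
  refine Summable.of_norm ?_
  simp only [habs]
  rw [summable_prod_of_nonneg fun x ↦ by have := ha x.1; positivity]
  exact ⟨fun p ↦ (hrow p).summable, by simpa only [(hrow _).tsum_eq] using hs⟩

theorem summable_taylorCoeff (ha : ∀ p, 0 ≤ a p) (hc : 0 ≤ c) (hcr : c < r)
    (hs : Summable fun p ↦ a p * r ^ p) (k : ℕ) :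
    Summable fun p ↦ a p * (c ^ (p - k) * p.choose k) := by
  have hd : 0 < r - c := sub_pos.2 hcr
  have harray := summable_mul_pow_mul_pow_mul_choose (h := r - c) ha hc
    (by rwa [abs_of_pos hd, add_sub_cancel])
  refine ((harray.prod_symm.prod_factor k).mul_left ((r - c) ^ k)⁻¹).congr fun p ↦ ?_
  simp only [Prod.swap_prod_mk]
  field_simp

theorem hasSum_mul_pow_mul_taylorCoeff (ha : ∀ p, 0 ≤ a p) (hc : 0 ≤ c) (hcr : c < r)
    (hs : Summable fun p ↦ a p * r ^ p) (h : ℝ) (k : ℕ) :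
    HasSum (fun p ↦ a p * (h ^ k * (c ^ (p - k) * p.choose k))) (h ^ k * taylorCoeff a c k) :=
  ((summable_taylorCoeff ha hc hcr hs k).hasSum.mul_left (h ^ k)).congr_fun fun _ ↦
    mul_left_comm ..

theorem hasSum_pow_mul_taylorCoeff (ha : ∀ p, 0 ≤ a p) (hc : 0 ≤ c) (hcr : c < r)
    (hs : Summable fun p ↦ a p * r ^ p) (hh : c + |h| ≤ r) :
    HasSum (fun k ↦ h ^ k * taylorCoeff a c k) (∑' p, a p * (c + h) ^ p) := by
  have harray := summable_mul_pow_mul_pow_mul_choose (h := h) ha hc <|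
    hs.of_nonneg_of_le (fun p ↦ by have := ha p; positivity) fun p ↦ by
      have := ha p
      gcongr
  have hrows := harray.hasSum.prod_fiberwise fun p ↦
    (hasSum_pow_mul_pow_mul_choose c h p).mul_left (a p)
  rw [hrows.tsum_eq]
  exact ((Equiv.prodComm ℕ ℕ).hasSum_iff.2 harray.hasSum).prod_fiberwise
    (hasSum_mul_pow_mul_taylorCoeff ha hc hcr hs h)

/- Tonelli: for nonnegative terms the converse of the rearrangement needs no convergence of
`∑ a p * (c + h) ^ p` beforehand. -/
theorem hasSum_mul_add_pow_of_taylorCoeff (ha : ∀ p, 0 ≤ a p) (hc : 0 ≤ c) (hcr : c < r)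
    (hs : Summable fun p ↦ a p * r ^ p) (hh : 0 ≤ h) {S : ℝ}
    (hS : HasSum (fun k ↦ h ^ k * taylorCoeff a c k) S) :
    HasSum (fun p ↦ a p * (c + h) ^ p) S := by
  have hcol := hasSum_mul_pow_mul_taylorCoeff ha hc hcr hs h
  have harray : Summable fun x : ℕ × ℕ ↦
      a x.2 * (h ^ x.1 * (c ^ (x.2 - x.1) * x.2.choose x.1)) := by
    rw [summable_prod_of_nonneg fun x ↦ by have := ha x.2; positivity]
    exact ⟨fun k ↦ (hcol k).summable, by simpa only [(hcol _).tsum_eq] using hS.summable⟩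
  rw [← (harray.hasSum.prod_fiberwise hcol).unique hS]
  exact ((Equiv.prodComm ℕ ℕ).hasSum_iff.2 harray.hasSum).prod_fiberwise fun p ↦
    (hasSum_pow_mul_pow_mul_choose c h p).mul_left (a p)

theorem hasFPowerSeriesAt_taylorCoeff (ha : ∀ p, 0 ≤ a p) (hc : 0 ≤ c) {g : ℝ → ℝ}
    (hg : ∀ᶠ u in 𝓝 c, HasSum (fun p ↦ a p * u ^ p) (g u)) :
    HasFPowerSeriesAt g (FormalMultilinearSeries.ofScalars ℝ (taylorCoeff a c)) c := by
  obtain ⟨r, hcr, hr⟩ := hg.exists_gt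
  rw [hasFPowerSeriesAt_iff]
  have hshift : Tendsto (fun h ↦ c + h) (𝓝 0) (𝓝 c) := by
    simpa using (continuous_const_add c).tendsto 0
  filter_upwards [hshift.eventually hg, Metric.ball_mem_nhds (0 : ℝ) (sub_pos.2 hcr)] with h hh hhr
  have hhr : c + |h| ≤ r := by
    rw [mem_ball_zero_iff, Real.norm_eq_abs] at hhr
    linarith
  simpa [FormalMultilinearSeries.coeff_ofScalars, hh.tsum_eq] using
    hasSum_pow_mul_taylorCoeff ha hc hcr hr.summable hhr

end PowerSeriesNonneg

theorem exists_hasFPowerSeriesOnBall_of_analyticAt {𝕜 E F : Type*} [NontriviallyNormedField 𝕜]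
    [NormedAddCommGroup E] [NormedSpace 𝕜 E] [NormedAddCommGroup F] [NormedSpace 𝕜 F]
    [CompleteSpace F] {f : E → F} {x : E} (hf : AnalyticAt 𝕜 f x) :
    ∃ ε > 0, ∀ y ∈ Metric.eball x ε,
      ∃ q : FormalMultilinearSeries 𝕜 E F, HasFPowerSeriesOnBall f q y ε := by
  obtain ⟨q, r, hq⟩ := hf
  refine ⟨r / 2, ENNReal.half_pos hq.r_pos.ne', fun y hy ↦ ⟨q.changeOrigin (y - x), ?_⟩⟩
  have hy' : (‖y - x‖₊ : ENNReal) < r / 2 := by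
    rwa [← enorm_eq_nnnorm, ← edist_eq_enorm_sub]
  have hshift := hq.changeOrigin (hy'.trans_le ENNReal.half_le_self)
  rw [add_sub_cancel] at hshift
  refine hshift.mono (ENNReal.half_pos hq.r_pos.ne') (ENNReal.le_sub_of_add_le_left (by simp) ?_)
  exact (add_le_add_left hy'.le _).trans_eq (ENNReal.add_halves r)

/- Pringsheim's theorem. The Taylor series of `g` at a point `c < R` close to `R` has nonnegative
coefficients and converges beyond `R`, so it can be rearranged back into the series at `0`. -/
theorem eventually_hasSum_of_analyticAt {a : ℕ → ℝ} (ha : ∀ p, 0 ≤ a p) {g : ℝ → ℝ} {R : ℝ}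
    (hR : 0 < R) (hg : AnalyticAt ℝ g R)
    (hsum : ∀ᶠ u in 𝓝[<] R, HasSum (fun p ↦ a p * u ^ p) (g u)) :
    ∀ᶠ u in 𝓝 R, HasSum (fun p ↦ a p * u ^ p) (g u) := by
  obtain ⟨ε, hε, hball⟩ := exists_hasFPowerSeriesOnBall_of_analyticAt hg
  have hnear : ∀ᶠ c in 𝓝[<] R, ∀ᶠ u in 𝓝 c, HasSum (fun p ↦ a p * u ^ p) (g u) := by
    filter_upwards [eventually_eventually_nhdsWithin.2 hsum, self_mem_nhdsWithin] with c hc hcR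
    rwa [isOpen_Iio.nhdsWithin_eq hcR] at hc
  have hclose : ∀ᶠ c in 𝓝[<] R, c ∈ Metric.eball R ε :=
    mem_nhdsWithin_of_mem_nhds (Metric.eball_mem_nhds R hε)
  have hleft : ∀ᶠ c in 𝓝[<] R, c ∈ Ioo 0 R := Ioo_mem_nhdsLT hR
  obtain ⟨c, hc, hcball, hc0, hcR⟩ := (hnear.and (hclose.and hleft)).exists
  obtain ⟨r, hcr, hr⟩ := hc.exists_gt
  obtain ⟨q, hq⟩ := hball c hcball
  rw [hq.hasFPowerSeriesAt.eq_formalMultilinearSeries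
    (hasFPowerSeriesAt_taylorCoeff ha hc0.le hc)] at hq
  filter_upwards [Ioi_mem_nhds hcR,
    Metric.isOpen_eball.mem_nhds (Metric.mem_eball_comm.1 hcball)] with u hcu hu
  have htaylor : HasSum (fun k ↦ (u - c) ^ k * taylorCoeff a c k) (g u) := by
    simpa [mul_comm] using hq.hasSum_sub hu
  simpa using hasSum_mul_add_pow_of_taylorCoeff ha hc0.le hcr hr.summable
    (sub_nonneg.2 (le_of_lt hcu)) htaylor

theorem hasSum_of_analyticOnNhd_Ioo {a : ℕ → ℝ} (ha : ∀ p, 0 ≤ a p) {g : ℝ → ℝ} {r R : ℝ}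
    (hr : 0 < r) (hg : AnalyticOnNhd ℝ g (Ioo 0 R))
    (hsum : ∀ u ∈ Ioo 0 r, HasSum (fun p ↦ a p * u ^ p) (g u)) :
    ∀ u ∈ Ioo 0 R, HasSum (fun p ↦ a p * u ^ p) (g u) := by
  by_contra! hfail
  obtain ⟨u₁, hu₁⟩ := hfail
  let B := {u ∈ Ioo 0 R | ¬ HasSum (fun p ↦ a p * u ^ p) (g u)}
  have hrB : r ∈ lowerBounds B := fun u hu ↦ le_of_not_gt fun hur ↦ hu.2 (hsum u ⟨hu.1.1, hur⟩)
  have hB : IsGLB B (sInf B) := isGLB_csInf ⟨u₁, hu₁⟩ ⟨r, hrB⟩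
  have hpos : 0 < sInf B := hr.trans_le (hB.2 hrB)
  have hlt : sInf B < R := (hB.1 hu₁).trans_lt hu₁.1.2
  have hleft : ∀ᶠ u in 𝓝[<] sInf B, HasSum (fun p ↦ a p * u ^ p) (g u) := by
    filter_upwards [Ioo_mem_nhdsLT hpos] with u hu
    by_contra h
    exact hu.2.not_ge (hB.1 ⟨⟨hu.1, hu.2.trans hlt⟩, h⟩)
  have hnear := eventually_hasSum_of_analyticAt ha hpos (hg _ ⟨hpos, hlt⟩) hleft
  obtain ⟨u, hu, hsum_u⟩ := ((hB.frequently_mem ⟨u₁, hu₁⟩).and_eventually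
    (hnear.filter_mono nhdsWithin_le_nhds)).exists
  exact hu.2 hsum_u

theorem analyticAt_invFunOn {𝕜 : Type*} [NontriviallyNormedField 𝕜] [CompleteSpace 𝕜]
    [CharZero 𝕜] {f : 𝕜 → 𝕜} {s : Set 𝕜} {x : 𝕜} (hs : s ∈ 𝓝 x) (hinj : InjOn f s)
    (hf : AnalyticAt 𝕜 f x) (hf' : deriv f x ≠ 0) : AnalyticAt 𝕜 (invFunOn f s) (f x) := by
  have hstrict := hf.hasStrictDerivAt
  have hlocal := hf.analyticAt_localInverse hf'
  refine hlocal.congr ?_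
  have hmem : ∀ᶠ y in 𝓝 (f x), hstrict.localInverse _ _ _ hf' y ∈ s := by
    refine hlocal.continuousAt.eventually_mem ?_
    rwa [show hstrict.localInverse _ _ _ hf' (f x) = x from
      HasStrictFDerivAt.localInverse_apply_image ..]
  filter_upwards [hmem, hstrict.eventually_right_inverse hf'] with y hy hfy
  rw [← hinj.leftInvOn_invFunOn hy, hfy]

theorem hasSum_of_strictMonoOn_parametrization {a : ℕ → ℝ} (ha : ∀ p, 0 ≤ a p) {φ F : ℝ → ℝ}
    {b ρ : ℝ} (hρ : ρ ∈ Ioc 0 b) (hφ0 : φ 0 = 0) (hcont : ContinuousOn φ (Icc 0 b))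
    (hmono : StrictMonoOn φ (Icc 0 b)) (hφ : AnalyticOnNhd ℝ φ (Ioo 0 b))
    (hφ' : ∀ x ∈ Ioo 0 b, deriv φ x ≠ 0) (hF : AnalyticOnNhd ℝ F (Ioo 0 b))
    (hsum : ∀ x ∈ Ioo 0 ρ, HasSum (fun p ↦ a p * φ x ^ p) (F x)) :
    ∀ x ∈ Ioo 0 b, HasSum (fun p ↦ a p * φ x ^ p) (F x) := by
  have hb : 0 < b := hρ.1.trans_le hρ.2
  have hinj : InjOn φ (Ioo 0 b) := hmono.injOn.mono Ioo_subset_Icc_self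
  have himage {d : ℝ} (hd : d ∈ Ioc 0 b) : Ioo 0 (φ d) ⊆ φ '' Ioo 0 d := by
    have := intermediate_value_Ioo hd.1.le (hcont.mono (Icc_subset_Icc_right hd.2))
    rwa [hφ0] at this
  have hinv : LeftInvOn (invFunOn φ (Ioo 0 b)) φ (Ioo 0 b) := hinj.leftInvOn_invFunOn
  have hmem {x : ℝ} (hx : x ∈ Ioo 0 b) : φ x ∈ Ioo 0 (φ b) := by
    have := hmono.mapsTo_Ioo hx
    rwa [hφ0] at this
  have key := hasSum_of_analyticOnNhd_Ioo ha (g := F ∘ invFunOn φ (Ioo 0 b)) (r := φ ρ)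
    (R := φ b) ?_ ?_ ?_
  · intro x hx
    simpa [hinv hx] using key (φ x) (hmem hx)
  · rw [← hφ0]
    exact hmono ⟨le_rfl, hb.le⟩ ⟨hρ.1.le, hρ.2⟩ hρ.1
  · rintro _ hu
    obtain ⟨x, hx, rfl⟩ := himage ⟨hb, le_rfl⟩ hu
    exact AnalyticAt.comp (by rw [hinv hx]; exact hF x hx)
      (analyticAt_invFunOn (Ioo_mem_nhds hx.1 hx.2) hinj (hφ x hx) (hφ' x hx))
  · rintro _ hu
    obtain ⟨x, hx, rfl⟩ := himage hρ hu
    simpa [hinv ⟨hx.1, hx.2.trans_le hρ.2⟩] using hsum x hx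

section Limits

variable {ι : Type*} {l : Filter ι}

theorem hasSum_of_tendsto_of_le [l.NeBot] {β : Type*} {f : ι → β → ℝ} {g : β → ℝ} {F : ι → ℝ}
    {L : ℝ} (hf : ∀ᶠ x in l, ∀ b, 0 ≤ f x b) (hle : ∀ᶠ x in l, ∀ b, f x b ≤ g b)
    (hlim : ∀ b, Tendsto (f · b) l (𝓝 (g b))) (hsum : ∀ᶠ x in l, HasSum (f x) (F x))
    (hF : Tendsto F l (𝓝 L)) : HasSum g L := by
  have hpartial (s : Finset β) : ∑ b ∈ s, g b ≤ L := by
    refine le_of_tendsto_of_tendsto (tendsto_finsetSum s fun b _ ↦ hlim b) hF ?_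
    filter_upwards [hf, hsum] with x hx hFx
    exact sum_le_hasSum s (fun b _ ↦ hx b) hFx
  obtain ⟨x, hx, hgx⟩ := (hf.and hle).exists
  have hg : Summable g := summable_of_sum_le (fun b ↦ (hx b).trans (hgx b)) hpartial
  have hdom : Tendsto (fun x ↦ ∑' b, f x b) l (𝓝 (∑' b, g b)) := by
    refine tendsto_tsum_of_dominated_convergence hg hlim ?_
    filter_upwards [hf, hle] with x hx hgx b
    rw [Real.norm_of_nonneg (hx b)]
    exact hgx b
  have htsum : F =ᶠ[l] fun x ↦ ∑' b, f x b := hsum.mono fun x hx ↦ hx.tsum_eq.symm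
  exact (hg.hasSum_iff).2 (tendsto_nhds_unique hdom (hF.congr' htsum))

variable {a : ℕ → ℝ} {u G : ι → ℝ} {L D R : ℝ}

theorem hasSum_mul_pow_of_tendsto [l.NeBot] (ha : ∀ p, 0 ≤ a p)
    (hu : Tendsto u l (𝓝[Icc 0 R] R)) (hG : ∀ᶠ x in l, HasSum (fun p ↦ a p * u x ^ p) (G x))
    (hL : Tendsto G l (𝓝 L)) : HasSum (fun p ↦ a p * R ^ p) L := by
  rw [tendsto_nhdsWithin_iff] at hu
  refine hasSum_of_tendsto_of_le ?_ ?_ (fun p ↦ (hu.1.pow p).const_mul (a p)) hG hL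
  · filter_upwards [hu.2] with x hx p
    exact mul_nonneg (ha p) (pow_nonneg hx.1 p)
  · filter_upwards [hu.2] with x hx p
    exact mul_le_mul_of_nonneg_left (pow_le_pow_left₀ hx.1 hx.2 p) (ha p)

theorem hasSum_deriv_of_tendsto_slope [l.NeBot] (ha : ∀ p, 0 ≤ a p)
    (hu : Tendsto u l (𝓝[Ico 0 R] R)) (hG : ∀ᶠ x in l, HasSum (fun p ↦ a p * u x ^ p) (G x))
    (hL : HasSum (fun p ↦ a p * R ^ p) L)
    (hD : Tendsto (fun x ↦ (L - G x) / (R - u x)) l (𝓝 D)) :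
    HasSum (fun p : ℕ ↦ a p * (p * R ^ (p - 1))) D := by
  rw [tendsto_nhdsWithin_iff] at hu
  simp only [← geom_sum₂_self R]
  refine hasSum_of_tendsto_of_le
    (f := fun x p ↦ a p * ∑ i ∈ Finset.range p, R ^ i * u x ^ (p - 1 - i)) ?_ ?_ ?_ ?_ hD
  · filter_upwards [hu.2] with x ⟨hx, hxR⟩ p
    have := ha p
    have := hx.trans hxR.le
    positivity
  · filter_upwards [hu.2] with x ⟨hx, hxR⟩ p
    have := ha p
    have := hx.trans hxR.le
    gcongr
  · exact fun p ↦ (tendsto_finsetSum _ fun i _ ↦ (hu.1.pow _).const_mul _).const_mul (a p)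
  · filter_upwards [hG, hu.2] with x hx ⟨_, hxR⟩
    refine ((hL.sub hx).div_const (R - u x)).congr_fun fun p ↦ ?_
    rw [← mul_sub, mul_div_assoc, ← geom_sum₂_mul, mul_div_cancel_right₀ _ (sub_pos.2 hxR).ne']

theorem hasSum_succ_mul_pow {v S : ℝ} (hv : v ≠ 0) (hS : HasSum (fun p ↦ a p * v ^ p) S) :
    HasSum (fun p ↦ a (p + 1) * v ^ p) ((S - a 0) / v) := by
  have hshift := ((hasSum_nat_add_iff' 1).2 hS).div_const v
  simp only [Finset.range_one, Finset.sum_singleton, pow_zero, mul_one] at hshift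
  refine hshift.congr_fun fun p ↦ ?_
  rw [pow_succ, ← mul_assoc, mul_div_cancel_right₀ _ hv]

theorem tendsto_slope_of_hasSum_pow (hu : Tendsto u l (𝓝[≠] 0))
    (hG : ∀ᶠ x in l, HasSum (fun p ↦ a p * u x ^ p) (G x)) :
    Tendsto (fun x ↦ (G x - a 0) / u x) l (𝓝 (a 1)) := by
  obtain rfl | _ := l.eq_or_neBot
  · exact tendsto_bot
  rw [tendsto_nhdsWithin_iff] at hu
  have hquot : ∀ᶠ x in l, HasSum (fun p ↦ a (p + 1) * u x ^ p) ((G x - a 0) / u x) := by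
    filter_upwards [hG, hu.2] with x hx hux using hasSum_succ_mul_pow hux hx
  obtain ⟨x₀, hx₀, hux₀⟩ := (hquot.and hu.2).exists
  have hsmall : ∀ᶠ x in l, |u x| ≤ |u x₀| :=
    hu.1.abs.eventually_le_const (by simpa using hux₀)
  have hlim : Tendsto (fun x ↦ ∑' p, a (p + 1) * u x ^ p) l (𝓝 (∑' p, a (p + 1) * 0 ^ p)) := by
    refine tendsto_tsum_of_dominated_convergence hx₀.summable.norm
      (fun p ↦ (hu.1.pow p).const_mul _) (hsmall.mono fun x hx p ↦ ?_)
    simp only [norm_mul, norm_pow, Real.norm_eq_abs]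
    gcongr
  rw [tsum_eq_single 0 fun p hp ↦ by simp [hp], pow_zero, mul_one] at hlim
  exact hlim.congr' (hquot.mono fun x hx ↦ hx.tsum_eq)

end Limits

section DoubleSeries

variable {z : ℕ → ℕ → ℝ} {s v S : ℝ}

theorem hasSum_swap (hS : HasSum (fun pq : ℕ × ℕ ↦ z pq.1 pq.2 * s ^ pq.1 * v ^ pq.2) S) :
    HasSum (fun pq : ℕ × ℕ ↦ z pq.2 pq.1 * v ^ pq.1 * s ^ pq.2) S :=
  ((Equiv.prodComm ℕ ℕ).hasSum_iff.2 hS).congr_fun fun _ ↦ mul_right_comm ..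

theorem hasSum_row_zero (hS : HasSum (fun pq : ℕ × ℕ ↦ z pq.1 pq.2 * 0 ^ pq.1 * v ^ pq.2) S) :
    HasSum (fun q ↦ z 0 q * v ^ q) S := by
  have hrow := (Prod.mk_right_injective (β := ℕ) 0).hasSum_iff (a := S)
    (f := fun pq : ℕ × ℕ ↦ z pq.1 pq.2 * 0 ^ pq.1 * v ^ pq.2) fun ⟨p, q⟩ hpq ↦ ?_
  · simpa [comp_def] using hrow.2 hS
  · have hp : p ≠ 0 := by
      rintro rfl
      exact hpq ⟨q, rfl⟩
    simp [hp]

theorem summable_row (hs : s ≠ 0)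
    (hS : Summable fun pq : ℕ × ℕ ↦ z pq.1 pq.2 * s ^ pq.1 * v ^ pq.2) (p : ℕ) :
    Summable fun q ↦ z p q * v ^ q := by
  refine ((hS.prod_factor p).mul_left (s ^ p)⁻¹).congr fun q ↦ ?_
  field_simp

theorem hasSum_rows (hrow : ∀ p, Summable fun q ↦ z p q * v ^ q)
    (hS : HasSum (fun pq : ℕ × ℕ ↦ z pq.1 pq.2 * s ^ pq.1 * v ^ pq.2) S) :
    HasSum (fun p ↦ (∑' q, z p q * v ^ q) * s ^ p) S :=
  hS.prod_fiberwise fun p ↦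
    ((hrow p).hasSum.mul_right (s ^ p)).congr_fun fun _ ↦ mul_right_comm ..

theorem hasSum_row_one_of_tendsto {ι : Type*} {l : Filter ι} [l.NeBot] {u G : ι → ℝ} {S₀ S₁ : ℝ}
    (hu : Tendsto u l (𝓝[≠] 0))
    (hG : ∀ᶠ x in l, HasSum (fun pq : ℕ × ℕ ↦ z pq.1 pq.2 * u x ^ pq.1 * v ^ pq.2) (G x))
    (h₀ : HasSum (fun q ↦ z 0 q * v ^ q) S₀)
    (h₁ : Tendsto (fun x ↦ (G x - S₀) / u x) l (𝓝 S₁)) :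
    HasSum (fun q ↦ z 1 q * v ^ q) S₁ := by
  obtain ⟨x, hx, hux⟩ := (hG.and (tendsto_nhdsWithin_iff.1 hu).2).exists
  have hrow := summable_row hux hx.summable
  have hslope := tendsto_slope_of_hasSum_pow hu (hG.mono fun x hx ↦ hasSum_rows hrow hx)
  rw [h₀.tsum_eq] at hslope
  exact (hrow 1).hasSum_iff.2 (tendsto_nhds_unique hslope h₁)

end DoubleSeries

section Constants

theorem sqrt_seven_sq : √7 ^ 2 = 7 := Real.sq_sqrt (by norm_num)

theorem tc_pos : 0 < tc := by
  unfold tc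
  positivity

theorem uc_pos : 0 < uc := by
  have := tc_pos
  unfold uc
  positivity

theorem nuc_pos : 0 < nuc := by
  unfold nuc
  positivity

theorem tc_sq : tc ^ 2 = 10 / (64 * (7 + √7) ^ 3) := by
  have hrpow : ((7 + √7) ^ ((3 : ℝ) / 2)) ^ 2 = (7 + √7) ^ 3 := by
    rw [← Real.rpow_mul_natCast (by positivity), ← Real.rpow_natCast]
    norm_num
  rw [tc, div_pow, mul_pow, hrpow, Real.sq_sqrt (by norm_num)]
  norm_num

theorem nuc_sq_sub_one : nuc ^ 2 - 1 = 4 * (7 + √7) := by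
  unfold nuc
  linear_combination 4 * sqrt_seven_sq

theorem nuc_sq_sub_one_mul_tc : (nuc ^ 2 - 1) * tc = 10 / 3 * uc := by
  rw [nuc_sq_sub_one, uc]
  ring

theorem nuc_sq_sub_one_mul_uc_sq : (nuc ^ 2 - 1) * uc ^ 2 = 9 / 10 := by
  rw [nuc_sq_sub_one, uc, mul_pow, mul_pow, tc_sq]
  field_simp
  norm_num

end Constants

section RealParametrization

/-- The cubic polynomial shared by the rational functions `û`, `Ẑ₀` and `Ẑ₁`. -/
noncomputable def cubicFactor (x : ℝ) : ℝ := 10 - 12 * x + 6 * x ^ 2 - x ^ 3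

/-- The parametrization `û` as a real function. -/
noncomputable def uhatReal (x : ℝ) : ℝ := uc / 3 * x * cubicFactor x

/-- The parametrization `Ẑ₀` as a real function. -/
noncomputable def Z0hatReal (x : ℝ) : ℝ :=
  1 / 10 * (1 - (1 - √7) * x + 3 * x ^ 2 - x ^ 3) * cubicFactor x

/-- The parametrization `Ẑ₁` as a real function; `cubicFactor` does not vanish on `(-∞, 1]`. -/
noncomputable def Z1hatReal (x : ℝ) : ℝ :=
  3 / (10 * uc) * (√7 - 1 + x - 3 * (4 - 3 * x + x ^ 2) / cubicFactor x)

variable {x : ℝ}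

theorem uhat_ofReal (x : ℝ) : uhat x = (uhatReal x : ℂ) := by
  simp [uhat, uhatReal, cubicFactor]

theorem Z0hat_ofReal (x : ℝ) : Z0hat x = (Z0hatReal x : ℂ) := by
  simp [Z0hat, Z0hatReal, cubicFactor]

theorem Z1hat_ofReal (x : ℝ) : Z1hat x = (Z1hatReal x : ℂ) := by
  simp [Z1hat, Z1hatReal, cubicFactor]

theorem cubicFactor_pos (hx : x ≤ 1) : 0 < cubicFactor x := by
  have hcube : cubicFactor x = 2 + (2 - x) ^ 3 := by
    unfold cubicFactor
    ring
  have : 0 < 2 - x := by linarith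
  rw [hcube]
  positivity

theorem uhatReal_zero : uhatReal 0 = 0 := by simp [uhatReal]

theorem uhatReal_one : uhatReal 1 = uc := by norm_num [uhatReal, cubicFactor]

theorem Z0hatReal_zero : Z0hatReal 0 = 1 := by norm_num [Z0hatReal, cubicFactor]

theorem Z0hatReal_one : Z0hatReal 1 = 3 * (2 + √7) / 10 := by
  unfold Z0hatReal cubicFactor
  ring

theorem Z1hatReal_one : Z1hatReal 1 = 3 * (√7 - 2) / (10 * uc) := by
  unfold Z1hatReal cubicFactor
  ring

theorem uc_mul_Z1hatReal_zero : uc * Z1hatReal 0 = 3 / 10 * (√7 - 11 / 5) := by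
  have := uc_pos
  unfold Z1hatReal cubicFactor
  field_simp
  norm_num
  ring

theorem uhatReal_mul_Z1hatReal (hx : x ≤ 1) :
    uhatReal x * Z1hatReal x =
      1 / 10 * x * ((√7 - 1 + x) * cubicFactor x - 3 * (4 - 3 * x + x ^ 2)) := by
  have := uc_pos
  have := cubicFactor_pos hx
  unfold uhatReal Z1hatReal
  field_simp

theorem uhatReal_pos (hx : x ∈ Ioc 0 1) : 0 < uhatReal x :=
  mul_pos (mul_pos (div_pos uc_pos three_pos) hx.1) (cubicFactor_pos hx.2)

theorem hasDerivAt_uhatReal (x : ℝ) :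
    HasDerivAt uhatReal (uc / 3 * (2 * (1 - x) ^ 2 * (5 - 2 * x))) x := by
  have hexpand : uhatReal = fun x ↦ uc / 3 * (10 * x - 12 * x ^ 2 + 6 * x ^ 3 - x ^ 4) := by
    funext x
    unfold uhatReal cubicFactor
    ring
  rw [hexpand]
  refine (((((hasDerivAt_id x).const_mul 10).sub ((hasDerivAt_pow 2 x).const_mul 12)).add
    ((hasDerivAt_pow 3 x).const_mul 6)).sub (hasDerivAt_pow 4 x)).const_mul (uc / 3)
    |>.congr_deriv ?_
  push_cast
  ring

theorem deriv_uhatReal_pos (hx : x < 1) : 0 < deriv uhatReal x := by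
  rw [(hasDerivAt_uhatReal x).deriv]
  have := uc_pos
  have : 0 < 1 - x := by linarith
  have : 0 < 5 - 2 * x := by linarith
  positivity

theorem continuous_uhatReal : Continuous uhatReal :=
  continuous_iff_continuousAt.2 fun x ↦ (hasDerivAt_uhatReal x).continuousAt

theorem strictMonoOn_uhatReal : StrictMonoOn uhatReal (Icc 0 1) :=
  strictMonoOn_of_deriv_pos (convex_Icc 0 1) continuous_uhatReal.continuousOn fun x hx ↦ by
    rw [interior_Icc] at hx
    exact deriv_uhatReal_pos hx.2

theorem analyticAt_cubicFactor (x : ℝ) : AnalyticAt ℝ cubicFactor x := by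
  unfold cubicFactor
  fun_prop

theorem analyticAt_uhatReal (x : ℝ) : AnalyticAt ℝ uhatReal x := by
  have := analyticAt_cubicFactor x
  unfold uhatReal
  fun_prop

theorem analyticAt_Z0hatReal (x : ℝ) : AnalyticAt ℝ Z0hatReal x := by
  have := analyticAt_cubicFactor x
  unfold Z0hatReal
  fun_prop

theorem analyticAt_Z1hatReal (hx : x ≤ 1) : AnalyticAt ℝ Z1hatReal x := by
  have := analyticAt_cubicFactor x
  have := (cubicFactor_pos hx).ne'
  unfold Z1hatReal
  fun_prop (disch := assumption)

theorem tendsto_uhatReal_nhdsGT_zero : Tendsto uhatReal (𝓝[>] 0) (𝓝[≠] 0) := by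
  refine tendsto_nhdsWithin_iff.2 ⟨?_, ?_⟩
  · simpa only [uhatReal_zero] using (continuous_uhatReal.tendsto 0).mono_left nhdsWithin_le_nhds
  · filter_upwards [Ioc_mem_nhdsGT one_pos] with x hx using (uhatReal_pos hx).ne'

theorem tendsto_uhatReal_nhdsLT_one : Tendsto uhatReal (𝓝[<] 1) (𝓝[Ico 0 uc] uc) := by
  refine tendsto_nhdsWithin_iff.2 ⟨?_, ?_⟩
  · simpa only [uhatReal_one] using (continuous_uhatReal.tendsto 1).mono_left nhdsWithin_le_nhds
  · filter_upwards [Ioo_mem_nhdsLT one_pos] with x hx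
    rw [← uhatReal_one]
    exact ⟨(uhatReal_pos ⟨hx.1, hx.2.le⟩).le,
      strictMonoOn_uhatReal ⟨hx.1.le, hx.2.le⟩ ⟨zero_le_one, le_rfl⟩ hx.2⟩

/- `Ẑ₀` and `Ẑ₁` reach their values at `x = 1` to third order as well, which is why `Z₀` and `Z₁`
have finite slopes at the critical point `uc`. -/
theorem uc_sub_uhatReal (x : ℝ) : uc - uhatReal x = uc * (1 - x) ^ 3 * (3 - x) / 3 := by
  rw [uhatReal, cubicFactor]
  ring

theorem slope_Z0hatReal_one (hx : x < 1) :
    (Z0hatReal 1 - Z0hatReal x) / (uc - uhatReal x) =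
      3 / (10 * uc) * (2 + √7 - cubicFactor x / (3 - x)) := by
  have := uc_pos
  have : 0 < 1 - x := by linarith
  have : 0 < 3 - x := by linarith
  rw [uc_sub_uhatReal, Z0hatReal_one, Z0hatReal, cubicFactor]
  field_simp
  ring

theorem slope_Z1hatReal_one (hx : x < 1) :
    (Z1hatReal 1 - Z1hatReal x) / (uc - uhatReal x) =
      9 * (2 - x) / (10 * uc ^ 2 * cubicFactor x * (3 - x)) := by
  have := uc_pos
  have := cubicFactor_pos hx.le
  have : 0 < 1 - x := by linarith
  have : 0 < 3 - x := by linarith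
  rw [uc_sub_uhatReal, Z1hatReal_one, Z1hatReal]
  field_simp
  rw [cubicFactor]
  ring

theorem tendsto_slope_Z0hatReal :
    Tendsto (fun x ↦ (Z0hatReal 1 - Z0hatReal x) / (uc - uhatReal x)) (𝓝[<] 1)
      (𝓝 (3 * (2 * √7 + 1) / (20 * uc))) := by
  have := (analyticAt_cubicFactor 1).continuousAt
  have hcont : ContinuousAt
      (fun x ↦ 3 / (10 * uc) * (2 + √7 - cubicFactor x / (3 - x))) 1 := by
    fun_prop (disch := norm_num)
  have hval : 3 / (10 * uc) * (2 + √7 - cubicFactor 1 / (3 - 1)) =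
      3 * (2 * √7 + 1) / (20 * uc) := by
    unfold cubicFactor
    ring
  rw [← hval]
  exact (hcont.tendsto.mono_left nhdsWithin_le_nhds).congr'
    (eventually_nhdsWithin_of_forall fun _ hx ↦ (slope_Z0hatReal_one hx).symm)

theorem tendsto_slope_Z1hatReal :
    Tendsto (fun x ↦ (Z1hatReal 1 - Z1hatReal x) / (uc - uhatReal x)) (𝓝[<] 1)
      (𝓝 (3 / (20 * uc ^ 2))) := by
  have := (analyticAt_cubicFactor 1).continuousAt
  have hden : 10 * uc ^ 2 * cubicFactor 1 * (3 - 1) ≠ 0 := by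
    have := uc_pos
    have := cubicFactor_pos le_rfl
    positivity
  have hcont : ContinuousAt
      (fun x ↦ 9 * (2 - x) / (10 * uc ^ 2 * cubicFactor x * (3 - x))) 1 := by
    fun_prop (disch := assumption)
  have hval : 9 * (2 - 1) / (10 * uc ^ 2 * cubicFactor 1 * (3 - 1)) = 3 / (20 * uc ^ 2) := by
    unfold cubicFactor
    ring
  rw [← hval]
  exact (hcont.tendsto.mono_left nhdsWithin_le_nhds).congr'
    (eventually_nhdsWithin_of_forall fun _ hx ↦ (slope_Z1hatReal_one hx).symm)

theorem uhatReal_sq_mul_Z1hatReal (hx : x ≤ 1) :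
    uhatReal x ^ 2 * Z1hatReal x =
      (nuc * uhatReal x - (nuc ^ 2 - 1) * tc * (Z0hatReal x + uhatReal x * Z1hatReal 0))
          * (Z0hatReal x - 1)
        - (nuc ^ 2 - 1) * uhatReal x * (uhatReal x ^ 2 - tc * Z0hatReal x * Z1hatReal 0) := by
  calc uhatReal x ^ 2 * Z1hatReal x
    _ = uhatReal x * (uhatReal x * Z1hatReal x) := by ring
    _ = nuc * uhatReal x * (Z0hatReal x - 1) - 10 / 3 * uc * Z0hatReal x * (Z0hatReal x - 1)
        + 10 / 3 * (uc * Z1hatReal 0) * uhatReal x - (nuc ^ 2 - 1) * uhatReal x ^ 3 := by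
      rw [uhatReal_mul_Z1hatReal hx, uc_mul_Z1hatReal_zero, Z0hatReal, uhatReal, cubicFactor]
      nth_rw 1 [nuc]
      linear_combination
        -(uc * (x * (10 - 12 * x + 6 * x ^ 2 - x ^ 3)) ^ 2 / 30) * sqrt_seven_sq
          + uc * (x * (10 - 12 * x + 6 * x ^ 2 - x ^ 3) / 3) ^ 3 * nuc_sq_sub_one_mul_uc_sq
    _ = _ := by
      linear_combination (Z0hatReal x * (Z0hatReal x - 1) - uhatReal x * Z1hatReal 0)
        * nuc_sq_sub_one_mul_tc

end RealParametrization

section FunctionalEquation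

/-- The coefficient of `Z(u, v) - Z₀(v)` in the functional equation, at `u = û x` and `v = û y`. -/
noncomputable def kernel (x y : ℝ) : ℝ :=
  nuc * uhatReal y * uhatReal x - uhatReal x ^ 2
    - (nuc ^ 2 - 1) * tc * uhatReal y * (Z0hatReal x + uhatReal x * Z1hatReal y)

/-- A solution of the functional equation in real variables: at `u = û x` and `v = û y` with
`x, y ∈ [0, ρ)`, the double series with coefficients `z` converges to `Z x y`, its terms with
`v`-exponent `0` add up to `Ẑ₀ x`, and the functional equation holds. -/
structure IsRealSolution (z : ℕ → ℕ → ℝ) (Z : ℝ → ℝ → ℝ) (ρ : ℝ) : Prop where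
  pos : 0 < ρ
  le_one : ρ ≤ 1
  hasSum_column_zero : ∀ x ∈ Ico 0 ρ, HasSum (fun p ↦ z p 0 * uhatReal x ^ p) (Z0hatReal x)
  hasSum : ∀ x ∈ Ico 0 ρ, ∀ y ∈ Ico 0 ρ,
    HasSum (fun pq : ℕ × ℕ ↦ z pq.1 pq.2 * uhatReal x ^ pq.1 * uhatReal y ^ pq.2) (Z x y)
  kernel_mul : ∀ x ∈ Ico 0 ρ, ∀ y ∈ Ico 0 ρ,
    kernel x y * (Z x y - Z0hatReal y) =
      uhatReal x ^ 2 * (Z0hatReal y - Z0hatReal x)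
        + (nuc ^ 2 - 1) * uhatReal x * uhatReal y
          * (uhatReal x ^ 2 - tc * Z0hatReal x * Z1hatReal y)

variable {z : ℕ → ℕ → ℝ} {Z : ℝ → ℝ → ℝ} {ρ x y : ℝ}

theorem exists_isRealSolution (hρ : 0 < ρ)
    (hz0 : ∀ H : ℂ, ‖H‖ < ρ → HasSum (fun p ↦ (z p 0 : ℂ) * uhat H ^ p) (Z0hat H))
    (hZ : ∀ H K : ℂ, ‖H‖ < ρ → ‖K‖ < ρ → ∃ ZHK : ℂ,
      HasSum (fun pq : ℕ × ℕ ↦ (z pq.1 pq.2 : ℂ) * uhat H ^ pq.1 * uhat K ^ pq.2) ZHK ∧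
      ((nuc : ℂ) * uhat K * uhat H - uhat H ^ 2
          - ((nuc : ℂ) ^ 2 - 1) * (tc : ℂ) * uhat K * (Z0hat H + uhat H * Z1hat K))
          * (ZHK - Z0hat K)
        = uhat H ^ 2 * (Z0hat K - Z0hat H)
          + ((nuc : ℂ) ^ 2 - 1) * uhat H * uhat K * (uhat H ^ 2 - (tc : ℂ) * Z0hat H * Z1hat K)) :
    ∃ Z : ℝ → ℝ → ℝ, IsRealSolution z Z (min ρ 1) := by
  have hnorm {x : ℝ} (hx : x ∈ Ico 0 (min ρ 1)) : ‖(x : ℂ)‖ < ρ := by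
    rw [Complex.norm_of_nonneg hx.1]
    exact hx.2.trans_le (min_le_left ρ 1)
  have hreal (x) (hx : x ∈ Ico 0 (min ρ 1)) (y) (hy : y ∈ Ico 0 (min ρ 1)) : ∃ S : ℝ,
      HasSum (fun pq : ℕ × ℕ ↦ z pq.1 pq.2 * uhatReal x ^ pq.1 * uhatReal y ^ pq.2) S ∧
      kernel x y * (S - Z0hatReal y) = uhatReal x ^ 2 * (Z0hatReal y - Z0hatReal x)
        + (nuc ^ 2 - 1) * uhatReal x * uhatReal y
          * (uhatReal x ^ 2 - tc * Z0hatReal x * Z1hatReal y) := by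
    obtain ⟨S, hS, heq⟩ := hZ x y (hnorm hx) (hnorm hy)
    simp only [uhat_ofReal, Z0hat_ofReal, Z1hat_ofReal] at hS heq
    norm_cast at hS
    obtain ⟨S, rfl⟩ : ∃ T : ℝ, (T : ℂ) = S :=
      ⟨_, (Complex.hasSum_ofReal.2 (Complex.summable_ofReal.1 hS.summable).hasSum).unique hS⟩
    exact ⟨S, Complex.hasSum_ofReal.1 hS, by unfold kernel; exact_mod_cast heq⟩
  choose! Z hsum heq using hreal
  refine ⟨Z, lt_min hρ one_pos, min_le_right ρ 1, fun x hx ↦ ?_, hsum, heq⟩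
  have hcol := hz0 x (hnorm hx)
  rw [uhat_ofReal, Z0hat_ofReal] at hcol
  exact Complex.hasSum_ofReal.1 (by exact_mod_cast hcol)

theorem kernel_zero_left (y : ℝ) : kernel 0 y = -((nuc ^ 2 - 1) * tc * uhatReal y) := by
  rw [kernel, uhatReal_zero, Z0hatReal_zero]
  ring

theorem kernel_zero_right (x : ℝ) : kernel x 0 = -uhatReal x ^ 2 := by
  rw [kernel, uhatReal_zero]
  ring

theorem kernel_zero_left_ne_zero (hy : y ∈ Ioc 0 1) : kernel 0 y ≠ 0 := by
  rw [kernel_zero_left, nuc_sq_sub_one_mul_tc]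
  exact neg_ne_zero.2 (mul_pos (mul_pos (by norm_num) uc_pos) (uhatReal_pos hy)).ne'

theorem kernel_zero_right_ne_zero (hx : x ∈ Ioc 0 1) : kernel x 0 ≠ 0 := by
  rw [kernel_zero_right]
  exact neg_ne_zero.2 (pow_pos (uhatReal_pos hx) 2).ne'

theorem continuousAt_kernel_left (x y : ℝ) : ContinuousAt (kernel · y) x := by
  have := (analyticAt_uhatReal x).continuousAt
  have := (analyticAt_Z0hatReal x).continuousAt
  unfold kernel
  fun_prop

theorem continuousAt_kernel_right (x : ℝ) (hy : y ≤ 1) : ContinuousAt (kernel x) y := by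
  have := (analyticAt_uhatReal y).continuousAt
  have := (analyticAt_Z1hatReal hy).continuousAt
  unfold kernel
  fun_prop

namespace IsRealSolution

variable (hZ : IsRealSolution z Z ρ)
include hZ

theorem mem_Ioc (hx : x ∈ Ioo 0 ρ) : x ∈ Ioc 0 1 := ⟨hx.1, hx.2.le.trans hZ.le_one⟩

theorem eventually_mem_Ico : ∀ᶠ x in 𝓝[>] 0, x ∈ Ico 0 ρ := by
  filter_upwards [Ioo_mem_nhdsGT hZ.pos] with x hx using Ioo_subset_Ico_self hx

theorem coeff_zero_zero : z 0 0 = 1 := by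
  have hsum := hZ.hasSum_column_zero 0 ⟨le_rfl, hZ.pos⟩
  rw [uhatReal_zero, Z0hatReal_zero] at hsum
  simpa using (hasSum_single 0 fun p hp ↦ by simp [hp]).unique hsum

theorem apply_zero_left (hy : y ∈ Ioo 0 ρ) : Z 0 y = Z0hatReal y := by
  have heq := hZ.kernel_mul 0 ⟨le_rfl, hZ.pos⟩ y (Ioo_subset_Ico_self hy)
  refine sub_eq_zero.1 ((mul_eq_zero_iff_left (kernel_zero_left_ne_zero (hZ.mem_Ioc hy))).1 ?_)
  rw [heq, uhatReal_zero]
  ring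

theorem hasSum_row_zero (hy : y ∈ Ioo 0 ρ) :
    HasSum (fun q ↦ z 0 q * uhatReal y ^ q) (Z0hatReal y) := by
  have hsum := hZ.hasSum 0 ⟨le_rfl, hZ.pos⟩ y (Ioo_subset_Ico_self hy)
  rw [uhatReal_zero, hZ.apply_zero_left hy] at hsum
  exact _root_.hasSum_row_zero hsum

theorem tendsto_slope_left (hy : y ∈ Ioo 0 ρ) :
    Tendsto (fun x ↦ (Z x y - Z0hatReal y) / uhatReal x) (𝓝[>] 0) (𝓝 (Z1hatReal y)) := by
  have hker := kernel_zero_left_ne_zero (hZ.mem_Ioc hy)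
  have hcont : ContinuousAt (fun x ↦ (uhatReal x * (Z0hatReal y - Z0hatReal x)
      + (nuc ^ 2 - 1) * uhatReal y * (uhatReal x ^ 2 - tc * Z0hatReal x * Z1hatReal y))
      / kernel x y) 0 := by
    have := continuousAt_kernel_left 0 y
    have := (analyticAt_uhatReal 0).continuousAt
    have := (analyticAt_Z0hatReal 0).continuousAt
    fun_prop (disch := assumption)
  have hlim := hcont.tendsto.mono_left (nhdsWithin_le_nhds (s := Ioi 0))
  convert hlim.congr' ?_ using 2
  · rw [eq_div_iff hker, kernel_zero_left, uhatReal_zero, Z0hatReal_zero]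
    ring
  · filter_upwards [hZ.eventually_mem_Ico, tendsto_uhatReal_nhdsGT_zero self_mem_nhdsWithin,
      (continuousAt_kernel_left 0 y).continuousWithinAt.eventually_ne hker] with x hx hux hkx
    have heq := hZ.kernel_mul x hx y (Ioo_subset_Ico_self hy)
    rw [div_eq_div_iff hkx hux]
    linear_combination -heq

/- In terms of `Z x y - Ẑ₀ x` both sides of the functional equation become divisible by `û y`. -/
theorem tendsto_slope_right (hx : x ∈ Ioo 0 ρ) :
    Tendsto (fun y ↦ (Z x y - Z0hatReal x) / uhatReal y) (𝓝[>] 0) (𝓝 (Z1hatReal x)) := by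
  have hker := kernel_zero_right_ne_zero (hZ.mem_Ioc hx)
  have hcont : ContinuousAt (fun y ↦
      ((nuc ^ 2 - 1) * uhatReal x * (uhatReal x ^ 2 - tc * Z0hatReal x * Z1hatReal y)
        - (nuc * uhatReal x - (nuc ^ 2 - 1) * tc * (Z0hatReal x + uhatReal x * Z1hatReal y))
          * (Z0hatReal x - Z0hatReal y)) / kernel x y) 0 := by
    have := continuousAt_kernel_right x zero_le_one
    have := (analyticAt_Z0hatReal 0).continuousAt
    have := (analyticAt_Z1hatReal zero_le_one).continuousAt
    fun_prop (disch := assumption)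
  have hlim := hcont.tendsto.mono_left (nhdsWithin_le_nhds (s := Ioi 0))
  convert hlim.congr' ?_ using 2
  · rw [eq_div_iff hker, kernel_zero_right, Z0hatReal_zero]
    linear_combination -uhatReal_sq_mul_Z1hatReal (hZ.mem_Ioc hx).2
  · filter_upwards [hZ.eventually_mem_Ico, tendsto_uhatReal_nhdsGT_zero self_mem_nhdsWithin,
      (continuousAt_kernel_right x zero_le_one).continuousWithinAt.eventually_ne hker]
      with y hy hvy hky
    have heq := hZ.kernel_mul x (Ioo_subset_Ico_self hx) y hy
    rw [div_eq_div_iff hky hvy]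
    unfold kernel at heq ⊢
    linear_combination -heq

theorem hasSum_row_one (hy : y ∈ Ioo 0 ρ) :
    HasSum (fun q ↦ z 1 q * uhatReal y ^ q) (Z1hatReal y) :=
  hasSum_row_one_of_tendsto tendsto_uhatReal_nhdsGT_zero
    (hZ.eventually_mem_Ico.mono fun x hx ↦ hZ.hasSum x hx y (Ioo_subset_Ico_self hy))
    (hZ.hasSum_row_zero hy) (hZ.tendsto_slope_left hy)

theorem hasSum_column_one (hx : x ∈ Ioo 0 ρ) :
    HasSum (fun p ↦ z p 1 * uhatReal x ^ p) (Z1hatReal x) :=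
  hasSum_row_one_of_tendsto (z := fun q p ↦ z p q) tendsto_uhatReal_nhdsGT_zero
    (hZ.eventually_mem_Ico.mono fun y hy ↦ hasSum_swap (hZ.hasSum x (Ioo_subset_Ico_self hx) y hy))
    (hZ.hasSum_column_zero x (Ioo_subset_Ico_self hx)) (hZ.tendsto_slope_right hx)

end IsRealSolution

end FunctionalEquation

section Moments

/-- The mass distribution `b` on `ℕ` has total mass `m₀` and first moment `m₁`. -/
def HasMoments (b : ℕ → ℝ) (m₀ m₁ : ℝ) : Prop :=
  HasSum b m₀ ∧ HasSum (fun k : ℕ ↦ k * b k) m₁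

theorem HasMoments.hasSum_affine {b : ℕ → ℝ} {m₀ m₁ : ℝ} (hb : HasMoments b m₀ m₁) (α β : ℝ) :
    HasSum (fun k : ℕ ↦ (α + β * k) * b k) (α * m₀ + β * m₁) :=
  ((hb.1.mul_left α).add (hb.2.mul_left β)).congr_fun fun _ ↦ by ring

variable {a : ℕ → ℝ} {ρ : ℝ}

theorem hasSum_at_uc {F : ℝ → ℝ} {D : ℝ} (ha : ∀ p, 0 ≤ a p) (hρ : ρ ∈ Ioc 0 1)
    (hF : AnalyticOnNhd ℝ F (Ioc 0 1))
    (hD : Tendsto (fun x ↦ (F 1 - F x) / (uc - uhatReal x)) (𝓝[<] 1) (𝓝 D))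
    (hsum : ∀ x ∈ Ioo 0 ρ, HasSum (fun p ↦ a p * uhatReal x ^ p) (F x)) :
    HasSum (fun p ↦ a p * uc ^ p) (F 1) ∧
      HasSum (fun p : ℕ ↦ a p * (p * uc ^ (p - 1))) D := by
  have hcontinued := hasSum_of_strictMonoOn_parametrization ha hρ uhatReal_zero
    continuous_uhatReal.continuousOn strictMonoOn_uhatReal (fun x _ ↦ analyticAt_uhatReal x)
    (fun x hx ↦ (deriv_uhatReal_pos hx.2).ne') (hF.mono Ioo_subset_Ioc_self) hsum
  have hleft : ∀ᶠ x in 𝓝[<] 1, HasSum (fun p ↦ a p * uhatReal x ^ p) (F x) :=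
    mem_of_superset (Ioo_mem_nhdsLT one_pos) hcontinued
  have hF1 : Tendsto F (𝓝[<] 1) (𝓝 (F 1)) :=
    (hF 1 ⟨one_pos, le_rfl⟩).continuousAt.tendsto.mono_left nhdsWithin_le_nhds
  have hvalue := hasSum_mul_pow_of_tendsto ha (tendsto_uhatReal_nhdsLT_one.mono_right
    (nhdsWithin_mono uc Ico_subset_Icc_self)) hleft hF1
  exact ⟨hvalue, hasSum_deriv_of_tendsto_slope ha tendsto_uhatReal_nhdsLT_one hleft hvalue hD⟩

theorem hasMoments_of_hasSum_Z1hatReal (ha : ∀ p, 0 ≤ a p) (hρ : ρ ∈ Ioc 0 1)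
    (hsum : ∀ x ∈ Ioo 0 ρ, HasSum (fun p ↦ a p * uhatReal x ^ p) (Z1hatReal x)) :
    HasMoments (fun k ↦ uc ^ k * a k) (3 * (√7 - 2) / (10 * uc)) (3 / (20 * uc)) := by
  have huc := uc_pos.ne'
  obtain ⟨hvalue, hderiv⟩ := hasSum_at_uc ha hρ (fun x hx ↦ analyticAt_Z1hatReal hx.2)
    tendsto_slope_Z1hatReal hsum
  constructor
  · simpa only [mul_comm, Z1hatReal_one] using hvalue
  · have hterm (k : ℕ) : k * (uc ^ k * a k) = uc * (a k * (k * uc ^ (k - 1))) := by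
      rcases k with _ | k
      · simp
      · rw [Nat.add_sub_cancel]
        ring
    have hval : 3 / (20 * uc) = uc * (3 / (20 * uc ^ 2)) := by field_simp
    rw [hval]
    exact (hderiv.mul_left uc).congr_fun hterm

theorem hasMoments_of_hasSum_Z0hatReal (ha : ∀ p, 0 ≤ a p) (ha0 : a 0 = 1) (hρ : ρ ∈ Ioc 0 1)
    (hsum : ∀ x ∈ Ioo 0 ρ, HasSum (fun p ↦ a p * uhatReal x ^ p) (Z0hatReal x)) :
    HasMoments (fun k ↦ uc ^ k * a (k + 1)) ((3 * √7 - 4) / (10 * uc)) (11 / (20 * uc)) := by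
  have huc := uc_pos.ne'
  obtain ⟨hvalue, hderiv⟩ := hasSum_at_uc ha hρ (fun x _ ↦ analyticAt_Z0hatReal x)
    tendsto_slope_Z0hatReal hsum
  have hmass : HasSum (fun k ↦ uc ^ k * a (k + 1)) ((3 * √7 - 4) / (10 * uc)) := by
    convert hasSum_succ_mul_pow huc hvalue using 1
    · simp only [mul_comm]
    · rw [ha0, Z0hatReal_one]
      field_simp
      ring
  have hterm (k : ℕ) : k * (uc ^ k * a (k + 1)) =
      a (k + 1) * ((k + 1 : ℕ) * uc ^ (k + 1 - 1)) - uc ^ k * a (k + 1) := by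
    rw [Nat.add_sub_cancel]
    push_cast
    ring
  have hval : 11 / (20 * uc) = 3 * (2 * √7 + 1) / (20 * uc)
      - ∑ i ∈ Finset.range 1, a i * (i * uc ^ (i - 1)) - (3 * √7 - 4) / (10 * uc) := by
    rw [Finset.sum_range_one, Nat.cast_zero]
    field_simp
    ring
  rw [hval]
  exact ⟨hmass, (((hasSum_nat_add_iff' 1).2 hderiv).sub hmass).congr_fun hterm⟩

end Moments

section StepDistribution

theorem hasSum_mul_ite {α : Type*} [DecidableEq α] (v₀ : α) (b : ℝ) (ψ : α → ℝ) :
    HasSum (fun v ↦ ψ v * if v = v₀ then b else 0) (ψ v₀ * b) := by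
  convert hasSum_ite_eq v₀ (ψ v₀ * b) using 2 with v
  split_ifs with hv <;> simp [hv]

theorem hasSum_mul_tsum_ite {α κ : Type*} [DecidableEq α] {e : κ → α} (he : Injective e)
    {b : κ → ℝ} {ψ : α → ℝ} {B : ℝ} (hB : HasSum (fun k ↦ ψ (e k) * b k) B) :
    HasSum (fun v ↦ ψ v * ∑' k, if v = e k then b k else 0) B := by
  have hval (k : κ) : (∑' j, if e k = e j then b j else 0) = b k := by
    rw [tsum_eq_single k fun j hj ↦ if_neg fun hkj ↦ hj (he hkj.symm), if_pos rfl]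
  rw [← he.hasSum_iff fun v hv ↦ ?_]
  · simpa only [comp_def, hval] using hB
  · have hne (k : κ) : v ≠ e k := fun hk ↦ hv ⟨k, hk.symm⟩
    simp [hne]

/-- The step distribution `w` on `ℤ²` built from the coefficients `z`: two atoms and four half-lines
of masses, where masses assigned to the same point add up. -/
noncomputable def stepMass (z : ℕ → ℕ → ℝ) (v : ℤ × ℤ) : ℝ :=
  (if v = (2, -1) then tc / uc else 0)
  + (if v = (0, 1) then nuc * tc / uc else 0)
  + (∑' k : ℕ, if v = (1, -(k : ℤ) - 1) then tc * uc ^ k * z 1 k else 0)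
  + (∑' k : ℕ, if v = (0, -(k : ℤ)) then nuc * tc * uc ^ k * z 0 (k + 1) else 0)
  + (∑' k : ℕ, if v = (1 - (k : ℤ), -1) then tc * uc ^ k * z (k + 1) 0 else 0)
  + (∑' k : ℕ, if v = (-(k : ℤ), 0) then nuc * tc * uc ^ k * z k 1 else 0)

variable {z : ℕ → ℕ → ℝ} {Z : ℝ → ℝ → ℝ} {ρ : ℝ}

theorem stepMass_nonneg (hz : ∀ p q, 0 ≤ z p q) (v : ℤ × ℤ) : 0 ≤ stepMass z v := by
  have := tc_pos
  have := uc_pos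
  have := nuc_pos
  have hite (P : Prop) [Decidable P] {b : ℝ} (hb : 0 ≤ b) : 0 ≤ if P then b else 0 := by
    split_ifs <;> simp [hb]
  unfold stepMass
  refine add_nonneg (add_nonneg (add_nonneg (add_nonneg (add_nonneg ?_ ?_) ?_) ?_) ?_) ?_
  · exact hite _ (by positivity)
  · exact hite _ (by positivity)
  all_goals exact tsum_nonneg fun k ↦ hite _ (mul_nonneg (by positivity) (hz _ _))

theorem hasSum_mul_stepMass (ψ : ℤ × ℤ → ℝ) {B₁ B₂ B₃ B₄ : ℝ}
    (h₁ : HasSum (fun k : ℕ ↦ ψ (1, -(k : ℤ) - 1) * (tc * uc ^ k * z 1 k)) B₁)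
    (h₂ : HasSum (fun k : ℕ ↦ ψ (0, -(k : ℤ)) * (nuc * tc * uc ^ k * z 0 (k + 1))) B₂)
    (h₃ : HasSum (fun k : ℕ ↦ ψ (1 - (k : ℤ), -1) * (tc * uc ^ k * z (k + 1) 0)) B₃)
    (h₄ : HasSum (fun k : ℕ ↦ ψ (-(k : ℤ), 0) * (nuc * tc * uc ^ k * z k 1)) B₄) :
    HasSum (fun v ↦ ψ v * stepMass z v)
      (ψ (2, -1) * (tc / uc) + ψ (0, 1) * (nuc * tc / uc) + B₁ + B₂ + B₃ + B₄) := by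
  simp only [stepMass, mul_add]
  exact (((((hasSum_mul_ite _ _ ψ).add (hasSum_mul_ite _ _ ψ)).add
    (hasSum_mul_tsum_ite (fun i j hij ↦ by simpa using hij) h₁)).add
    (hasSum_mul_tsum_ite (fun i j hij ↦ by simpa using hij) h₂)).add
    (hasSum_mul_tsum_ite (fun i j hij ↦ by simpa using hij) h₃)).add
    (hasSum_mul_tsum_ite (fun i j hij ↦ by simpa using hij) h₄)

theorem IsRealSolution.hasSum_affine_mul_stepMass (hz : ∀ p q, 0 ≤ z p q)
    (hZ : IsRealSolution z Z ρ) (α β γ : ℝ) :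
    HasSum (fun v : ℤ × ℤ ↦ (α + β * v.1 + γ * v.2) * stepMass z v)
      (α + (β + γ) / (4 * √7)) := by
  have hρ : ρ ∈ Ioc 0 1 := ⟨hZ.pos, hZ.le_one⟩
  have hrow₁ := hasMoments_of_hasSum_Z1hatReal (hz 1) hρ fun y hy ↦ hZ.hasSum_row_one hy
  have hrow₀ := hasMoments_of_hasSum_Z0hatReal (hz 0) hZ.coeff_zero_zero hρ
    fun y hy ↦ hZ.hasSum_row_zero hy
  have hcol₀ := hasMoments_of_hasSum_Z0hatReal (hz · 0) hZ.coeff_zero_zero hρ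
    fun x hx ↦ hZ.hasSum_column_zero x (Ioo_subset_Ico_self hx)
  have hcol₁ := hasMoments_of_hasSum_Z1hatReal (hz · 1) hρ fun x hx ↦ hZ.hasSum_column_one hx
  convert hasSum_mul_stepMass (fun v : ℤ × ℤ ↦ α + β * v.1 + γ * v.2)
    ((hrow₁.hasSum_affine (tc * (α + β - γ)) (tc * -γ)).congr_fun fun k ↦ by push_cast; ring)
    ((hrow₀.hasSum_affine (nuc * tc * α) (nuc * tc * -γ)).congr_fun fun k ↦ by push_cast; ring)
    ((hcol₀.hasSum_affine (tc * (α + β - γ)) (tc * -β)).congr_fun fun k ↦ by push_cast; ring)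
    ((hcol₁.hasSum_affine (nuc * tc * α) (nuc * tc * -β)).congr_fun fun k ↦ by push_cast; ring)
    using 1
  have htc : tc = 5 * uc / (6 * (7 + √7)) := by
    rw [uc]
    field_simp
  have := uc_pos
  push_cast
  rw [htc, nuc]
  field_simp
  linear_combination -(4800 * √7 * α + 1200 * (β + γ)) * sqrt_seven_sq

end StepDistribution

/-- `w` is a probability mass function on `ℤ²` with finite first absolute
moments, and both marginal means equal `1/(4√7)`; in particular the mean of the sum of the
coordinates is `1/(2√7)`. -/
theorem statement10
    (ρ : ℝ) (hρ : 0 < ρ)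
    (z : ℕ → ℕ → ℝ) (hz_nonneg : ∀ p q, 0 ≤ z p q)
    -- `z p 0` are the Taylor coefficients of `Z₀ = Ẑ₀ ∘ û⁻¹` at `0`
    (hz0 : ∀ H : ℂ, ‖H‖ < ρ →
      HasSum (fun p : ℕ => (z p 0 : ℂ) * uhat H ^ p) (Z0hat H))
    -- `z p q` are the Taylor coefficients at `(0,0)` of the solution `Z(u,v)` of the
    -- algebraic equation, expressed through the parametrization `u = û(H)`, `v = û(K)`
    (hZ : ∀ H K : ℂ, ‖H‖ < ρ → ‖K‖ < ρ → ∃ ZHK : ℂ,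
      HasSum (fun pq : ℕ × ℕ => (z pq.1 pq.2 : ℂ) * uhat H ^ pq.1 * uhat K ^ pq.2) ZHK ∧
      ((nuc : ℂ) * uhat K * uhat H - uhat H ^ 2
          - ((nuc : ℂ) ^ 2 - 1) * (tc : ℂ) * uhat K * (Z0hat H + uhat H * Z1hat K))
          * (ZHK - Z0hat K)
        = uhat H ^ 2 * (Z0hat K - Z0hat H)
          + ((nuc : ℂ) ^ 2 - 1) * uhat H * uhat K * (uhat H ^ 2 - (tc : ℂ) * Z0hat H * Z1hat K))
    -- the step distribution `w` on `ℤ²`: masses of the peeling events under `ℙ_∞`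
    -- (masses assigned to coinciding points add up)
    (w : ℤ × ℤ → ℝ)
    (hw : ∀ v : ℤ × ℤ, w v =
      (if v = (2, -1) then tc / uc else 0)
      + (if v = (0, 1) then nuc * tc / uc else 0)
      + (∑' k : ℕ, if v = (1, -(k : ℤ) - 1) then tc * uc ^ k * z 1 k else 0)
      + (∑' k : ℕ, if v = (0, -(k : ℤ)) then nuc * tc * uc ^ k * z 0 (k + 1) else 0)
      + (∑' k : ℕ, if v = (1 - (k : ℤ), -1) then tc * uc ^ k * z (k + 1) 0 else 0)
      + (∑' k : ℕ, if v = (-(k : ℤ), 0) then nuc * tc * uc ^ k * z k 1 else 0))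
    :
    (∀ v : ℤ × ℤ, 0 ≤ w v) ∧
    HasSum w 1 ∧
    Summable (fun v : ℤ × ℤ => |(v.1 : ℝ)| * w v) ∧
    Summable (fun v : ℤ × ℤ => |(v.2 : ℝ)| * w v) ∧
    (∑' v : ℤ × ℤ, (v.1 : ℝ) * w v) = 1 / (4 * Real.sqrt 7) ∧
    (∑' v : ℤ × ℤ, (v.2 : ℝ) * w v) = 1 / (4 * Real.sqrt 7) ∧
    (∑' v : ℤ × ℤ, ((v.1 : ℝ) + (v.2 : ℝ)) * w v) = 1 / (2 * Real.sqrt 7) := by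
  obtain rfl : w = stepMass z := funext hw
  obtain ⟨Z, hsol⟩ := exists_isRealSolution hρ hz0 hZ
  have hnonneg := stepMass_nonneg hz_nonneg
  have haffine := hsol.hasSum_affine_mul_stepMass hz_nonneg
  have hmass : HasSum (stepMass z) 1 := by simpa using haffine 1 0 0
  have hmean₁ : HasSum (fun v : ℤ × ℤ ↦ (v.1 : ℝ) * stepMass z v) (1 / (4 * √7)) := by
    simpa using haffine 0 1 0
  have hmean₂ : HasSum (fun v : ℤ × ℤ ↦ (v.2 : ℝ) * stepMass z v) (1 / (4 * √7)) := by
    simpa using haffine 0 0 1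
  have hmean : HasSum (fun v : ℤ × ℤ ↦ ((v.1 : ℝ) + v.2) * stepMass z v) (1 / (2 * √7)) := by
    convert haffine 0 1 1 using 1
    · simp
    · ring
  have habs {ψ : ℤ × ℤ → ℝ} (hψ : Summable fun v ↦ ψ v * stepMass z v) :
      Summable fun v ↦ |ψ v| * stepMass z v :=
    hψ.abs.congr fun v ↦ by rw [abs_mul, abs_of_nonneg (hnonneg v)]
  exact ⟨hnonneg, hmass, habs hmean₁.summable, habs hmean₂.summable,
    hmean₁.tsum_eq, hmean₂.tsum_eq, hmean.tsum_eq⟩
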